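/- arXiv:1312.5019 — 2 statements merged into one kernel-verified Lean document; each statement's English description precedes it below -/
import Mathlib

section
/- The Maclaurin coefficients a_k of y (where y(v) = v/f(v), y(0) = √2/2) satisfy, for n ≥ 1, the recurrence: a_n = -(2/(n+2)) · [∑_{k+j+l=n, 0≤k,j,l<n} a_k a_j a_l + ∑_{k+j=n-1} a_k a_j], with a_0 = √2/2. -/
open Real Set Finset

open Filter Topology PowerSeries
open scoped ContDiff

/-!
Put `F x = x - log (1 + x)` and `G x = sign x * √(F x)`, so that `F (f v) = v ^ 2`. Since `F` has a
double zero at `0` with `F'' 0 = 1`, we have `F x = x ^ 2 * h x` with `h` analytic at `0` and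
`h 0 = 1 / 2`; hence `G x = x * √(h x)` is analytic at `0` with nonzero derivative, and its inverse
`f` and `y v = v / f v` are analytic at `0`. Differentiating `F (f v) = v ^ 2` and `f v * y v = v`
and eliminating `f` gives `v * y' = y - 2 * y ^ 3 - 2 * v * y ^ 2`. In degree `n` the terms of
`y ^ 3` containing `a n` add up to `3 * a 0 ^ 2 * a n = 3 / 2 * a n`, which moves to the left-hand
side and produces the factor `n + 2`.
-/

section FormalPowerSeries

lemma coeff_pow_eq_coeff_trunc_pow_add {R : Type*} [CommSemiring R] (φ : R⟦X⟧) {n : ℕ} (hn : n ≠ 0)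
    (m : ℕ) :
    coeff n (φ ^ m) = (trunc n φ ^ m).coeff n + m * coeff 0 φ ^ (m - 1) * coeff n φ := by
  set τ : R⟦X⟧ := (trunc n φ : R⟦X⟧) with hτ
  set ψ : R⟦X⟧ := PowerSeries.mk fun i => coeff (i + n) φ with hψ
  obtain ⟨κ, hκ⟩ := Polynomial.powAddExpansion τ (ψ * X ^ n) m
  have hsplit : φ = τ + ψ * X ^ n := by rw [add_comm]; exact eq_shift_mul_X_pow_add_trunc n φ
  have hτ₀ : constantCoeff τ = coeff 0 φ := by
    rw [← coeff_zero_eq_constantCoeff_apply, hτ, Polynomial.coeff_coe, coeff_trunc,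
      if_pos (Nat.pos_of_ne_zero hn)]
  have hquad : coeff n (κ * (ψ * X ^ n) ^ 2) = 0 := by
    rw [mul_pow, ← pow_mul, ← mul_assoc, coeff_mul_X_pow', if_neg (by omega)]
  have hlin : coeff n ((m : R⟦X⟧) * τ ^ (m - 1) * (ψ * X ^ n)) =
      m * coeff 0 φ ^ (m - 1) * coeff n φ := by
    rw [← mul_assoc, coeff_mul_X_pow', if_pos le_rfl, Nat.sub_self]
    simp [hτ₀, hψ]
  conv_lhs => rw [hsplit, hκ, map_add, map_add, hquad, hlin, add_zero]
  rw [hτ, ← Polynomial.coe_pow, Polynomial.coeff_coe]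

lemma coeff_trunc_pow_three {R : Type*} [CommSemiring R] (φ : R⟦X⟧) (m n : ℕ) :
    (trunc m φ ^ 3).coeff n = ∑ k ∈ range m, ∑ j ∈ range m, ∑ l ∈ range m,
      if k + j + l = n then coeff k φ * coeff j φ * coeff l φ else 0 := by
  have htrunc : trunc m φ = ∑ k ∈ range m, Polynomial.monomial k (coeff k φ) := by
    ext i
    simp [coeff_trunc, Polynomial.coeff_monomial]
  rw [htrunc, pow_three', sum_mul_sum, sum_mul]
  simp only [sum_mul_sum, Polynomial.monomial_mul_monomial, Polynomial.finsetSum_coeff,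
    Polynomial.coeff_monomial]

lemma coeff_recurrence_of_X_mul_derivative_eq {R : Type*} [CommRing R] {φ : R⟦X⟧}
    (hφ : X * derivative R φ = φ - 2 * φ ^ 3 - 2 * (X * φ ^ 2)) (h₀ : 2 * coeff 0 φ ^ 2 = 1)
    (n : ℕ) :
    (n + 3) * coeff (n + 1) φ =
      -2 * ((trunc (n + 1) φ ^ 3).coeff (n + 1) + coeff n (φ ^ 2)) := by
  have hcoeff := congrArg (coeff (n + 1)) hφ
  rw [coeff_succ_X_mul, coeff_derivative, map_sub, map_sub, ← map_ofNat (C (R := R)) 2,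
    coeff_C_mul, coeff_C_mul, coeff_succ_X_mul,
    coeff_pow_eq_coeff_trunc_pow_add φ n.succ_ne_zero] at hcoeff
  push_cast at hcoeff
  linear_combination hcoeff - 3 * coeff (n + 1) φ * h₀

end FormalPowerSeries

section TaylorSeries

variable {𝕜 : Type*} [NontriviallyNormedField 𝕜] {f g : 𝕜 → 𝕜} {x : 𝕜}

/-- The Taylor series of `f` at `x`, as a formal power series in the displacement from `x`. -/
noncomputable def taylorSeries (f : 𝕜 → 𝕜) (x : 𝕜) : 𝕜⟦X⟧ :=
  PowerSeries.mk fun k => iteratedDeriv k f x / k.factorial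

lemma coeff_taylorSeries (f : 𝕜 → 𝕜) (x : 𝕜) (k : ℕ) :
    coeff k (taylorSeries f x) = iteratedDeriv k f x / k.factorial :=
  coeff_mk _ _

lemma taylorSeries_congr (h : f =ᶠ[𝓝 x] g) : taylorSeries f x = taylorSeries g x := by
  ext k
  rw [coeff_taylorSeries, coeff_taylorSeries, h.iteratedDeriv_eq k]

lemma taylorSeries_const (c x : 𝕜) : taylorSeries (fun _ => c) x = C c := by
  ext k
  rcases k with _ | k <;> simp [coeff_taylorSeries, iteratedDeriv_const, coeff_C]

lemma taylorSeries_id_zero : taylorSeries (fun z : 𝕜 => z) 0 = X := by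
  ext k
  rcases k with _ | _ | k <;> simp [coeff_taylorSeries, coeff_X, iteratedDeriv_fun_id]

lemma taylorSeries_sub (hf : ContDiffAt 𝕜 ∞ f x) (hg : ContDiffAt 𝕜 ∞ g x) :
    taylorSeries (fun z => f z - g z) x = taylorSeries f x - taylorSeries g x := by
  ext k
  simp only [coeff_taylorSeries, map_sub]
  rw [iteratedDeriv_fun_sub (hf.of_le (mod_cast le_top)) (hg.of_le (mod_cast le_top)), sub_div]

variable [CharZero 𝕜]

lemma taylorSeries_mul (hf : ContDiffAt 𝕜 ∞ f x) (hg : ContDiffAt 𝕜 ∞ g x) :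
    taylorSeries (fun z => f z * g z) x = taylorSeries f x * taylorSeries g x := by
  ext n
  rw [coeff_mul, Nat.sum_antidiagonal_eq_sum_range_succ_mk]
  simp only [coeff_taylorSeries]
  rw [iteratedDeriv_fun_mul (hf.of_le (mod_cast le_top)) (hg.of_le (mod_cast le_top)), sum_div]
  refine sum_congr rfl fun i hi => ?_
  have hn : (n.factorial : 𝕜) ≠ 0 := Nat.cast_ne_zero.2 n.factorial_ne_zero
  rw [Nat.cast_choose 𝕜 (mem_range_succ_iff.1 hi)]
  field_simp

lemma taylorSeries_pow (hf : ContDiffAt 𝕜 ∞ f x) (m : ℕ) :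
    taylorSeries (fun z => f z ^ m) x = taylorSeries f x ^ m := by
  induction m with
  | zero => simpa using taylorSeries_const 1 x
  | succ m ih => simp only [pow_succ, taylorSeries_mul (hf.pow m) hf, ih]

lemma taylorSeries_deriv (f : 𝕜 → 𝕜) (x : 𝕜) :
    taylorSeries (deriv f) x = derivative 𝕜 (taylorSeries f x) := by
  ext k
  rw [coeff_derivative, coeff_taylorSeries, coeff_taylorSeries, ← iteratedDeriv_succ',
    Nat.factorial_succ]
  push_cast
  field_simp

end TaylorSeries

section AnalyticFunctions

variable {𝕜 : Type*} [NontriviallyNormedField 𝕜]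

lemma analyticAt_iterate_dslope {E : Type*} [NormedAddCommGroup E] [NormedSpace 𝕜 E] {f : 𝕜 → E}
    {z₀ : 𝕜} (hf : AnalyticAt 𝕜 f z₀) (n : ℕ) :
    AnalyticAt 𝕜 ((Function.swap dslope z₀)^[n] f) z₀ :=
  let ⟨_, hp⟩ := hf
  (hp.has_fpower_series_iterate_dslope_fslope n).analyticAt

lemma iterate_dslope_same [CompleteSpace 𝕜] [CharZero 𝕜] {f : 𝕜 → 𝕜} {z₀ : 𝕜}
    (hf : AnalyticAt 𝕜 f z₀) (n : ℕ) :
    (Function.swap dslope z₀)^[n] f z₀ = iteratedDeriv n f z₀ / n.factorial := by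
  have hp := hf.hasFPowerSeriesAt
  have h := (hp.has_fpower_series_iterate_dslope_fslope n).coeff_zero 1
  rw [← FormalMultilinearSeries.coeff, FormalMultilinearSeries.coeff_iterate_fslope, zero_add,
    FormalMultilinearSeries.coeff_ofScalars] at h
  exact h.symm

lemma analyticAt_of_eventually_rightInverse [CompleteSpace 𝕜] [CharZero 𝕜] {f g : 𝕜 → 𝕜} {a : 𝕜}
    {s : Set 𝕜} (hg : AnalyticAt 𝕜 g a) (hg' : deriv g a ≠ 0) (hs : s ∈ 𝓝 a) (hinj : InjOn g s)
    (hfs : ∀ᶠ u in 𝓝 (g a), f u ∈ s) (hgf : ∀ᶠ u in 𝓝 (g a), g (f u) = u) :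
    AnalyticAt 𝕜 f (g a) := by
  have hstrict := hg.hasStrictDerivAt
  have hinv := hg.analyticAt_localInverse hg'
  have hinv_apply : hstrict.localInverse g _ a hg' (g a) = a :=
    HasStrictFDerivAt.localInverse_apply_image ..
  have hinv_mem := hinv.continuousAt.eventually_mem (by rwa [hinv_apply])
  refine hinv.congr ?_
  filter_upwards [hstrict.eventually_right_inverse hg', hinv_mem, hfs, hgf] with u hu hus hfu hgfu
  exact hinj hus hfu (hu.trans hgfu.symm)

lemma sign_mul_sqrt_sq_mul (t c : ℝ) : sign t * √(t ^ 2 * c) = t * √c := by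
  have hsign : sign t * |t| = t := by
    rcases lt_trichotomy t 0 with ht | rfl | ht
    · rw [sign_of_neg ht, abs_of_neg ht, neg_one_mul, neg_neg]
    · simp
    · rw [sign_of_pos ht, abs_of_pos ht, one_mul]
  rw [sqrt_mul (sq_nonneg t), sqrt_sq_eq_abs, ← mul_assoc, hsign]

lemma exists_analyticAt_sign_mul_sqrt_eq {F : ℝ → ℝ} {c : ℝ} (hF : AnalyticAt ℝ F c) (h₀ : F c = 0)
    (h₁ : deriv F c = 0) (h₂ : 0 < iteratedDeriv 2 F c) :
    ∃ s : ℝ → ℝ, AnalyticAt ℝ s c ∧ s c = √(iteratedDeriv 2 F c / 2) ∧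
      ∀ x, sign (x - c) * √(F x) = (x - c) * s x := by
  set h := (Function.swap dslope c)^[2] F
  have hh : AnalyticAt ℝ h c := analyticAt_iterate_dslope hF 2
  have hc : h c = iteratedDeriv 2 F c / 2 :=
    (iterate_dslope_same hF 2).trans (by simp)
  have hfactor (x : ℝ) : F x = (x - c) ^ 2 * h x := by
    refine (pow_sub_smul_iterate_dslope_of_zero 2 (fun k hk => ?_) x).symm
    interval_cases k <;> simp [h₀, h₁, Function.swap]
  refine ⟨fun x => √(h x), ?_, by simp only [hc], fun x => ?_⟩
  · exact (hh.contDiffAt.sqrt (n := ω) (by rw [hc]; positivity)).analyticAt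
  · rw [hfactor, sign_mul_sqrt_sq_mul]

lemma analyticAt_sign_mul_sqrt {F : ℝ → ℝ} {c : ℝ} (hF : AnalyticAt ℝ F c) (h₀ : F c = 0)
    (h₁ : deriv F c = 0) (h₂ : 0 < iteratedDeriv 2 F c) :
    AnalyticAt ℝ (fun x => sign (x - c) * √(F x)) c := by
  obtain ⟨s, hs, -, hfactor⟩ := exists_analyticAt_sign_mul_sqrt_eq hF h₀ h₁ h₂
  simp only [hfactor]
  fun_prop

lemma hasDerivAt_sign_mul_sqrt {F : ℝ → ℝ} {c : ℝ} (hF : AnalyticAt ℝ F c) (h₀ : F c = 0)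
    (h₁ : deriv F c = 0) (h₂ : 0 < iteratedDeriv 2 F c) :
    HasDerivAt (fun x => sign (x - c) * √(F x)) √(iteratedDeriv 2 F c / 2) c := by
  obtain ⟨s, hs, hsc, hfactor⟩ := exists_analyticAt_sign_mul_sqrt_eq hF h₀ h₁ h₂
  simp only [hfactor]
  simpa [hsc] using! ((hasDerivAt_id' c).sub_const c).mul hs.differentiableAt.hasDerivAt

end AnalyticFunctions

section SubLog

lemma hasDerivAt_sub_log_one_add {x : ℝ} (hx : 1 + x ≠ 0) :
    HasDerivAt (fun x : ℝ => x - log (1 + x)) (x / (1 + x)) x := by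
  convert! (hasDerivAt_id' x).sub (((hasDerivAt_id' x).const_add 1).log hx) using 1
  field_simp
  ring

lemma analyticAt_sub_log_one_add_zero : AnalyticAt ℝ (fun x : ℝ => x - log (1 + x)) 0 :=
  analyticAt_id.sub <| (analyticAt_const.add analyticAt_id).log (by norm_num)

lemma deriv_sub_log_one_add_zero : deriv (fun x : ℝ => x - log (1 + x)) 0 = 0 := by
  simpa using (hasDerivAt_sub_log_one_add (x := 0) (by simp)).deriv

lemma iteratedDeriv_two_sub_log_one_add_zero :
    iteratedDeriv 2 (fun x : ℝ => x - log (1 + x)) 0 = 1 := by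
  have hderiv : deriv (fun x : ℝ => x - log (1 + x)) =ᶠ[𝓝 0] fun x => x / (1 + x) := by
    filter_upwards [Ioi_mem_nhds (show (-1 : ℝ) < 0 by norm_num)] with x hx
    exact (hasDerivAt_sub_log_one_add (by linarith [hx.out])).deriv
  have hderiv₂ : HasDerivAt (fun x : ℝ => x / (1 + x)) 1 0 := by
    convert! (hasDerivAt_id' (0 : ℝ)).div ((hasDerivAt_id' (0 : ℝ)).const_add 1) (by simp) using 1
    simp
  rw [iteratedDeriv_succ, iteratedDeriv_one, hderiv.deriv_eq, hderiv₂.deriv]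

lemma strictMonoOn_sub_log_one_add : StrictMonoOn (fun x : ℝ => x - log (1 + x)) (Ici 0) := by
  refine strictMonoOn_of_hasDerivWithinAt_pos (f' := fun x => x / (1 + x)) (convex_Ici 0)
    (fun x hx => ?_) (fun x hx => ?_) fun x hx => ?_
  · exact (hasDerivAt_sub_log_one_add (by linarith [hx.out])).continuousAt.continuousWithinAt
  all_goals rw [interior_Ici, Set.mem_Ioi] at hx
  · exact (hasDerivAt_sub_log_one_add (by linarith)).hasDerivWithinAt
  · positivity

lemma strictAntiOn_sub_log_one_add : StrictAntiOn (fun x : ℝ => x - log (1 + x)) (Ioc (-1) 0) := by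
  refine strictAntiOn_of_hasDerivWithinAt_neg (f' := fun x => x / (1 + x)) (convex_Ioc (-1) 0)
    (fun x hx => ?_) (fun x hx => ?_) fun x hx => ?_
  · exact (hasDerivAt_sub_log_one_add (by linarith [hx.1])).continuousAt.continuousWithinAt
  all_goals rw [interior_Ioc] at hx
  · exact (hasDerivAt_sub_log_one_add (by linarith [hx.1])).hasDerivWithinAt
  · exact div_neg_of_neg_of_pos hx.2 (by linarith [hx.1])

lemma sub_log_one_add_nonneg {x : ℝ} (hx : -1 < x) : 0 ≤ x - log (1 + x) := by
  linarith [log_le_sub_one_of_pos (show 0 < 1 + x by linarith)]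

end SubLog

/-- The function `x ↦ sgn x * √(x - log (1 + x))`, whose inverse on `(-1, ∞)` is the function `f` of
the theorem. -/
noncomputable def signedSqrtSubLog (x : ℝ) : ℝ := sign x * √(x - log (1 + x))

lemma signedSqrtSubLog_zero : signedSqrtSubLog 0 = 0 := by simp [signedSqrtSubLog]

lemma signedSqrtSubLog_sq {x : ℝ} (hx : -1 < x) : signedSqrtSubLog x ^ 2 = x - log (1 + x) := by
  rcases eq_or_ne x 0 with rfl | h₀
  · simp [signedSqrtSubLog]
  · have hsign : sign x ^ 2 = 1 := by rcases sign_apply_eq_of_ne_zero x h₀ with h | h <;> simp [h]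
    rw [signedSqrtSubLog, mul_pow, hsign, sq_sqrt (sub_log_one_add_nonneg hx), one_mul]

lemma strictMonoOn_signedSqrtSubLog : StrictMonoOn signedSqrtSubLog (Ioi (-1)) := by
  have hneg {x : ℝ} (hx : x ≤ 0) : signedSqrtSubLog x = -√(x - log (1 + x)) := by
    rcases hx.eq_or_lt with rfl | hx
    · simp [signedSqrtSubLog]
    · rw [signedSqrtSubLog, sign_of_neg hx, neg_one_mul]
  have hpos {x : ℝ} (hx : 0 ≤ x) : signedSqrtSubLog x = √(x - log (1 + x)) := by
    rcases hx.eq_or_lt with rfl | hx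
    · simp [signedSqrtSubLog]
    · rw [signedSqrtSubLog, sign_of_pos hx, one_mul]
  rw [← Ioc_union_Ici_eq_Ioi (show (-1 : ℝ) < 0 by norm_num)]
  refine StrictMonoOn.union (c := 0) (fun x hx z hz hxz => ?_) (fun x hx z hz hxz => ?_)
    (isGreatest_Ioc (by norm_num)) isLeast_Ici
  · rw [hneg hx.2, hneg hz.2]
    exact neg_lt_neg <| sqrt_lt_sqrt (sub_log_one_add_nonneg hz.1)
      (strictAntiOn_sub_log_one_add hx hz hxz)
  · rw [hpos hx, hpos hz]
    exact sqrt_lt_sqrt (sub_log_one_add_nonneg (by linarith [hx.out]))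
      (strictMonoOn_sub_log_one_add hx hz hxz)

lemma analyticAt_signedSqrtSubLog_zero : AnalyticAt ℝ signedSqrtSubLog 0 := by
  simpa using! analyticAt_sign_mul_sqrt analyticAt_sub_log_one_add_zero
    (by simp) deriv_sub_log_one_add_zero (by simp [iteratedDeriv_two_sub_log_one_add_zero])

lemma hasDerivAt_signedSqrtSubLog_zero : HasDerivAt signedSqrtSubLog (√2)⁻¹ 0 := by
  simpa [iteratedDeriv_two_sub_log_one_add_zero] using!
    hasDerivAt_sign_mul_sqrt analyticAt_sub_log_one_add_zero (by simp) deriv_sub_log_one_add_zero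
      (by simp [iteratedDeriv_two_sub_log_one_add_zero])

lemma mul_deriv_eq_of_mul_eq_self_of_sub_log_eq_sq {f y : ℝ → ℝ} {v : ℝ} (hv : v ≠ 0)
    (hfv : 1 + f v ≠ 0) (hf : DifferentiableAt ℝ f v) (hy : DifferentiableAt ℝ y v)
    (hfy : ∀ᶠ u in 𝓝 v, f u * y u = u) (hlog : ∀ᶠ u in 𝓝 v, f u - log (1 + f u) = u ^ 2) :
    v * deriv y v = y v - 2 * y v ^ 3 - 2 * (v * y v ^ 2) := by
  have hfy_v : f v * y v = v := hfy.self_of_nhds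
  have hf_ne : f v ≠ 0 := left_ne_zero_of_mul (hfy_v.trans_ne hv)
  have hfy' : deriv f v * y v + f v * deriv y v = 1 :=
    (hf.hasDerivAt.mul hy.hasDerivAt).unique ((hasDerivAt_id' v).congr_of_eventuallyEq hfy)
  have hlog' : f v / (1 + f v) * deriv f v = 2 * v := by
    simpa using ((hasDerivAt_sub_log_one_add hfv).comp v hf.hasDerivAt).unique
      ((hasDerivAt_pow 2 v).congr_of_eventuallyEq hlog)
  have hf' : deriv f v = 2 * y v * (1 + f v) := by
    field_simp at hlog'
    apply mul_left_cancel₀ hf_ne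
    linear_combination hlog' - 2 * (1 + f v) * hfy_v
  linear_combination y v * hfy' - (deriv y v + 2 * y v ^ 2) * hfy_v - y v ^ 2 * hf'

section Inverse

variable {f : ℝ → ℝ} (hf : ∀ u, -1 < f u ∧ signedSqrtSubLog (f u) = u)
include hf

lemma inverse_signedSqrtSubLog_zero : f 0 = 0 :=
  strictMonoOn_signedSqrtSubLog.injOn (hf 0).1 (by simp)
    ((hf 0).2.trans signedSqrtSubLog_zero.symm)

lemma analyticAt_inverse_signedSqrtSubLog : AnalyticAt ℝ f 0 := by
  rw [← signedSqrtSubLog_zero]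
  exact analyticAt_of_eventually_rightInverse analyticAt_signedSqrtSubLog_zero
    (by rw [hasDerivAt_signedSqrtSubLog_zero.deriv]; positivity)
    (Ioi_mem_nhds (by norm_num)) strictMonoOn_signedSqrtSubLog.injOn
    (.of_forall fun u => (hf u).1) (.of_forall fun u => (hf u).2)

lemma hasDerivAt_inverse_signedSqrtSubLog : HasDerivAt f √2 0 := by
  have hG' := hasDerivAt_signedSqrtSubLog_zero
  rw [← inverse_signedSqrtSubLog_zero hf] at hG'
  simpa using hG'.of_local_left_inverse (analyticAt_inverse_signedSqrtSubLog hf).continuousAt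
    (by positivity) (.of_forall fun u => (hf u).2)

variable {y : ℝ → ℝ} (hy : ∀ v, y v = if v = 0 then √2 / 2 else v / f v)
include hy

lemma div_inverse_signedSqrtSubLog_eq_inv_dslope : y = fun v => (dslope f 0 v)⁻¹ := by
  funext v
  rcases eq_or_ne v 0 with rfl | hv
  · rw [hy, if_pos rfl, dslope_same, (hasDerivAt_inverse_signedSqrtSubLog hf).deriv,
      sqrt_div_self', one_div]
  · rw [hy, if_neg hv, dslope_of_ne f hv, slope_def_field, inverse_signedSqrtSubLog_zero hf,
      sub_zero, sub_zero, inv_div]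

lemma analyticAt_div_inverse_signedSqrtSubLog : AnalyticAt ℝ y 0 := by
  rw [div_inverse_signedSqrtSubLog_eq_inv_dslope hf hy]
  exact (analyticAt_iterate_dslope (analyticAt_inverse_signedSqrtSubLog hf) 1).inv <| by
    simp [Function.swap, (hasDerivAt_inverse_signedSqrtSubLog hf).deriv]

lemma eventually_mul_deriv_div_inverse_signedSqrtSubLog_eq :
    ∀ᶠ v in 𝓝 0, v * deriv y v = y v - 2 * y v ^ 3 - 2 * (v * y v ^ 2) := by
  have hlog (u : ℝ) : f u - log (1 + f u) = u ^ 2 := by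
    rw [← signedSqrtSubLog_sq (hf u).1, (hf u).2]
  have hfy (u : ℝ) : f u * y u = u := by
    rcases eq_or_ne u 0 with rfl | hu
    · rw [inverse_signedSqrtSubLog_zero hf, zero_mul]
    · have hfu : f u ≠ 0 := fun h => hu (by rw [← (hf u).2, h, signedSqrtSubLog_zero])
      rw [hy, if_neg hu, mul_div_cancel₀ _ hfu]
  filter_upwards [(analyticAt_inverse_signedSqrtSubLog hf).eventually_analyticAt,
    (analyticAt_div_inverse_signedSqrtSubLog hf hy).eventually_analyticAt] with v hfv hyv
  rcases eq_or_ne v 0 with rfl | hv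
  · rw [hy, if_pos rfl]
    linear_combination √2 / 4 * sq_sqrt zero_le_two
  · exact mul_deriv_eq_of_mul_eq_self_of_sub_log_eq_sq hv (by linarith [(hf v).1])
      hfv.differentiableAt hyv.differentiableAt (.of_forall hfy) (.of_forall hlog)

end Inverse

lemma X_mul_derivative_taylorSeries_eq {𝕜 : Type*} [NontriviallyNormedField 𝕜] [CharZero 𝕜]
    [CompleteSpace 𝕜] {y : 𝕜 → 𝕜} (hy : AnalyticAt 𝕜 y 0)
    (hode : ∀ᶠ v in 𝓝 0, v * deriv y v = y v - 2 * y v ^ 3 - 2 * (v * y v ^ 2)) :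
    X * derivative 𝕜 (taylorSeries y 0) =
      taylorSeries y 0 - 2 * taylorSeries y 0 ^ 3 - 2 * (X * taylorSeries y 0 ^ 2) := by
  have hy' : ContDiffAt 𝕜 ∞ y 0 := hy.contDiffAt
  have hdy : ContDiffAt 𝕜 ∞ (deriv y) 0 := hy.deriv.contDiffAt
  have hseries := taylorSeries_congr hode
  rwa [taylorSeries_mul (by fun_prop) hdy, taylorSeries_sub (by fun_prop) (by fun_prop),
    taylorSeries_sub hy' (by fun_prop), taylorSeries_mul (by fun_prop) (by fun_prop),
    taylorSeries_mul (by fun_prop) (by fun_prop), taylorSeries_mul (by fun_prop) (by fun_prop),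
    taylorSeries_pow hy', taylorSeries_pow hy', taylorSeries_const, taylorSeries_deriv,
    taylorSeries_id_zero, map_ofNat] at hseries

theorem stmt_15 (f : ℝ → ℝ)
    (hf : ∀ u : ℝ, f u ∈ Set.Ioi (-1 : ℝ) ∧
      Real.sign (f u) * Real.sqrt (f u - Real.log (1 + f u)) = u)
    (y : ℝ → ℝ)
    (hy : ∀ v : ℝ, y v = if v = 0 then Real.sqrt 2 / 2 else v / f v)
    (a : ℕ → ℝ)
    (ha : ∀ k : ℕ, a k = iteratedDeriv k y 0 / (Nat.factorial k)) :
    a 0 = Real.sqrt 2 / 2 ∧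
    ∀ n : ℕ, 1 ≤ n →
      a n = -(2 / ((n : ℝ) + 2)) *
        ((∑ k ∈ Finset.range n, ∑ j ∈ Finset.range n, ∑ l ∈ Finset.range n,
            if k + j + l = n then a k * a j * a l else 0) +
         ∑ k ∈ Finset.range n, a k * a (n - 1 - k)) := by
  have hya : AnalyticAt ℝ y 0 := analyticAt_div_inverse_signedSqrtSubLog hf hy
  have hcoeff (k : ℕ) : coeff k (taylorSeries y 0) = a k := by rw [coeff_taylorSeries, ha]
  have ha₀ : a 0 = √2 / 2 := by simp [ha, hy]
  have hode := X_mul_derivative_taylorSeries_eq hya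
    (eventually_mul_deriv_div_inverse_signedSqrtSubLog_eq hf hy)
  refine ⟨ha₀, fun n hn => ?_⟩
  obtain ⟨m, rfl⟩ := Nat.exists_eq_add_of_le' hn
  have hrec := coeff_recurrence_of_X_mul_derivative_eq hode
    (by rw [hcoeff, ha₀, div_pow, sq_sqrt zero_le_two]; norm_num) m
  rw [coeff_trunc_pow_three, sq, coeff_mul, Nat.sum_antidiagonal_eq_sum_range_succ_mk] at hrec
  simp only [hcoeff] at hrec
  rw [Nat.add_sub_cancel]
  push_cast
  field_simp
  linear_combination hrec
end

section
/- As s → +∞, Γ(s+1) = (s/e)^s √s · [∑_{k=0}^n 2a_{2k} Γ(k + 1/2) s^{-k} + o(s^{-n})] for each fixed n ≥ 0, where a_k are the Maclaurin coefficients of y. -/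
open Real Set Finset Filter Asymptotics

/-! Substituting `t = s * (1 + x)` in Euler's integral gives
`Γ(s + 1) = (s / e) ^ s * s * ∫ x in Ioi (-1), exp (-s * (x - log (1 + x)))`. In the coordinate `u`
with `u ^ 2 = x - log (1 + x)` and `x = f u`, this Laplace integral becomes the Gaussian integral
`∫ u, exp (-s * u ^ 2) * f' u`, and by Watson's lemma it may be expanded by integrating the
Maclaurin series of `f'` term by term, the odd terms dropping out. Differentiating
`u ^ 2 = f u - log (1 + f u)` yields `f' u = 2 * y u + 2 * u`, so the even coefficients of `f'` are
twice those of `y`. -/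

section GaussianMoments

open MeasureTheory

variable {s : ℝ}

lemma integral_abs_rpow_mul_exp_neg_mul_sq (hs : 0 < s) {p : ℝ} (hp : -1 < p) :
    ∫ u : ℝ, |u| ^ p * exp (-s * u ^ 2) = s ^ (-(p + 1) / 2) * Real.Gamma ((p + 1) / 2) := by
  have habs := integral_comp_abs (f := fun u => u ^ p * exp (-s * u ^ 2))
  have hIoi := integral_rpow_mul_exp_neg_mul_rpow two_pos hp hs
  simp only [sq_abs] at habs
  simp only [Real.rpow_two] at hIoi
  rw [habs, hIoi]
  ring

lemma integrable_abs_rpow_mul_exp_neg_mul_sq (hs : 0 < s) {p : ℝ} (hp : -1 < p) :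
    Integrable fun u : ℝ => |u| ^ p * exp (-s * u ^ 2) := by
  refine .of_integral_ne_zero ?_
  rw [integral_abs_rpow_mul_exp_neg_mul_sq hs hp]
  have : 0 < Real.Gamma ((p + 1) / 2) := Real.Gamma_pos_of_pos (by linarith)
  positivity

lemma integrable_pow_mul_exp_neg_mul_sq (hs : 0 < s) (m : ℕ) :
    Integrable fun u : ℝ => u ^ m * exp (-s * u ^ 2) := by
  simpa only [Real.rpow_natCast] using
    integrable_rpow_mul_exp_neg_mul_sq hs (neg_one_lt_zero.trans_le m.cast_nonneg)

lemma integral_odd_pow_mul_exp_neg_mul_sq (s : ℝ) {m : ℕ} (hm : Odd m) :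
    ∫ u : ℝ, u ^ m * exp (-s * u ^ 2) = 0 := by
  have h := integral_neg_eq_self (fun u : ℝ => u ^ m * exp (-s * u ^ 2)) volume
  simp only [hm.neg_pow, neg_sq, neg_mul, integral_neg] at h ⊢
  linarith

lemma sqrt_mul_integral_even_pow_mul_exp_neg_mul_sq (hs : 0 < s) (k : ℕ) :
    √s * ∫ u : ℝ, u ^ (2 * k) * exp (-s * u ^ 2) = Real.Gamma (k + 1 / 2) / s ^ k := by
  have h := integral_abs_rpow_mul_exp_neg_mul_sq hs
    (neg_one_lt_zero.trans_le (2 * k).cast_nonneg)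
  simp only [Real.rpow_natCast, (even_two_mul k).pow_abs] at h
  rw [h, Real.sqrt_eq_rpow, ← mul_assoc, ← Real.rpow_add hs]
  push_cast
  rw [show (1 / 2 : ℝ) + -(2 * k + 1) / 2 = -k by ring,
    show (2 * (k : ℝ) + 1) / 2 = k + 1 / 2 by ring, Real.rpow_neg hs.le, Real.rpow_natCast,
    ← div_eq_inv_mul]

end GaussianMoments

section WatsonLemma

open MeasureTheory Topology

variable {E : Type*} [NormedAddCommGroup E] [NormedSpace ℝ E]

lemma integrable_exp_neg_mul_sq_smul_of_le {h : ℝ → E} {s₀ s : ℝ} (hs : s₀ ≤ s)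
    (hint : Integrable fun u => exp (-s₀ * u ^ 2) • h u) :
    Integrable fun u => exp (-s * u ^ 2) • h u := by
  have hdamped := hint.bdd_smul 1 (φ := fun u : ℝ => exp (-(s - s₀) * u ^ 2))
    (by fun_prop) (.of_forall fun u => by
      rw [Real.norm_eq_abs, abs_exp, exp_le_one_iff]
      nlinarith [sq_nonneg u])
  refine hdamped.congr (.of_forall fun u => ?_)
  simp only [Pi.smul_apply', smul_smul, ← Real.exp_add]
  ring_nf

lemma norm_exp_neg_mul_sq_smul_le {C δ p s₀ s u : ℝ} {x : E} (hC : 0 ≤ C) (hδ : 0 ≤ δ)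
    (hs : s₀ ≤ s) (hx : |u| < δ → ‖x‖ ≤ C * |u| ^ p) :
    ‖exp (-s * u ^ 2) • x‖ ≤ C * (|u| ^ p * exp (-s * u ^ 2)) +
      exp (-(s - s₀) * δ ^ 2) * ‖exp (-s₀ * u ^ 2) • x‖ := by
  simp only [norm_smul, Real.norm_eq_abs, abs_exp]
  rcases lt_or_ge |u| δ with hu | hu
  · have hnear := mul_le_mul_of_nonneg_right (hx hu) (exp_pos (-s * u ^ 2)).le
    have : 0 ≤ exp (-(s - s₀) * δ ^ 2) * (exp (-s₀ * u ^ 2) * ‖x‖) := by positivity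
    linarith
  · have hsq : δ ^ 2 ≤ u ^ 2 := by simpa using pow_le_pow_left₀ hδ hu 2
    have hexp : exp (-s * u ^ 2) ≤ exp (-(s - s₀) * δ ^ 2) * exp (-s₀ * u ^ 2) := by
      rw [← Real.exp_add, Real.exp_le_exp]
      nlinarith
    have hfar := mul_le_mul_of_nonneg_right hexp (norm_nonneg x)
    have : 0 ≤ C * (|u| ^ p * exp (-s * u ^ 2)) := by positivity
    linarith

lemma isBigO_integral_exp_neg_mul_sq_smul {R : ℝ → E} {p s₀ : ℝ} (hp : -1 < p)
    (hint : Integrable fun u => exp (-s₀ * u ^ 2) • R u) (hR : R =O[𝓝 0] fun u => |u| ^ p) :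
    (fun s : ℝ => ∫ u, exp (-s * u ^ 2) • R u) =O[atTop] fun s => s ^ (-(p + 1) / 2) := by
  obtain ⟨C, hC, hbound⟩ := hR.exists_pos
  obtain ⟨δ, hδ, hball⟩ := Metric.eventually_nhds_iff.1 hbound.bound
  set K := ∫ u, ‖exp (-s₀ * u ^ 2) • R u‖
  have hle : ∀ s : ℝ, 0 < s → s₀ ≤ s → ‖∫ u, exp (-s * u ^ 2) • R u‖ ≤
      C * Real.Gamma ((p + 1) / 2) * s ^ (-(p + 1) / 2) +
        K * exp (s₀ * δ ^ 2) * exp (-δ ^ 2 * s) := by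
    intro s hs hs₀
    have hnear := (integrable_abs_rpow_mul_exp_neg_mul_sq hs hp).const_mul C
    have hfar := hint.norm.const_mul (exp (-(s - s₀) * δ ^ 2))
    calc ‖∫ u, exp (-s * u ^ 2) • R u‖
        ≤ ∫ u, (C * (|u| ^ p * exp (-s * u ^ 2)) +
            exp (-(s - s₀) * δ ^ 2) * ‖exp (-s₀ * u ^ 2) • R u‖) := by
          refine norm_integral_le_of_norm_le (hnear.add hfar) (.of_forall fun u => ?_)
          refine norm_exp_neg_mul_sq_smul_le hC.le hδ.le hs₀ fun hu => ?_
          simpa [abs_of_nonneg (Real.rpow_nonneg (abs_nonneg u) p)] using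
            hball (by simpa using hu : dist u 0 < δ)
      _ = _ := by
          rw [integral_add hnear hfar, integral_const_mul, integral_const_mul,
            integral_abs_rpow_mul_exp_neg_mul_sq hs hp,
            show -(s - s₀) * δ ^ 2 = s₀ * δ ^ 2 + -δ ^ 2 * s by ring, Real.exp_add]
          ring
  refine (IsBigO.of_norm_eventuallyLE (g := fun s => C * Real.Gamma ((p + 1) / 2) *
    s ^ (-(p + 1) / 2) + K * exp (s₀ * δ ^ 2) * exp (-δ ^ 2 * s)) ?_).trans
    ((isBigO_const_mul_self _ _ _).add
      ((isLittleO_exp_neg_mul_rpow_atTop (pow_pos hδ 2) _).isBigO.const_mul_left _))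
  filter_upwards [eventually_gt_atTop 0, eventually_ge_atTop s₀] with s hs hs₀ using hle s hs hs₀

lemma integrable_exp_neg_mul_sq_smul_sum {s : ℝ} (hs : 0 < s) (c : ℕ → E) (m : ℕ) :
    Integrable fun u : ℝ => exp (-s * u ^ 2) • ∑ k ∈ range m, u ^ k • c k := by
  simp only [Finset.smul_sum, smul_smul, mul_comm (exp _)]
  exact integrable_finsetSum _ fun k _ => (integrable_pow_mul_exp_neg_mul_sq hs k).smul_const (c k)

variable [CompleteSpace E]

lemma isBigO_sub_maclaurin {h : ℝ → E} (hh : AnalyticAt ℝ h 0) (m : ℕ) :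
    (fun u => h u - ∑ k ∈ range m, u ^ k • (k.factorial : ℝ)⁻¹ • iteratedDeriv k h 0)
      =O[𝓝 0] fun u => |u| ^ (m : ℝ) := by
  obtain ⟨F, hF, hhF⟩ := hh.exists_eq_sum_add_pow_mul m
  have hrem : (fun u => u ^ m • F u) =O[𝓝 0] fun u => |u| ^ m * 1 := by
    simpa only [smul_eq_mul, norm_pow, Real.norm_eq_abs] using
      (isBigO_refl (fun u : ℝ => u ^ m) (𝓝 0)).norm_right.smul (hF.continuousAt.isBigO_one ℝ)
  simpa [hhF, smul_smul, div_eq_mul_inv] using hrem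

lemma sqrt_smul_integral_exp_neg_mul_sq_smul_sum {s : ℝ} (hs : 0 < s) (c : ℕ → E) (N : ℕ) :
    √s • ∫ u : ℝ, exp (-s * u ^ 2) • ∑ k ∈ range (2 * N), u ^ k • c k =
      ∑ k ∈ range N, (Real.Gamma (k + 1 / 2) / s ^ k) • c (2 * k) := by
  simp only [Finset.smul_sum (s := range _), smul_smul, mul_comm (exp _)]
  rw [integral_finsetSum _ fun k _ => (integrable_pow_mul_exp_neg_mul_sq hs k).smul_const (c k)]
  simp only [integral_smul_const]
  induction N with
  | zero => simp
  | succ N ih =>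
    rw [show 2 * (N + 1) = 2 * N + 1 + 1 by ring, Finset.sum_range_succ, Finset.sum_range_succ,
      integral_odd_pow_mul_exp_neg_mul_sq s ⟨N, rfl⟩, zero_smul, add_zero, smul_add, ih,
      smul_smul, sqrt_mul_integral_even_pow_mul_exp_neg_mul_sq hs, Finset.sum_range_succ]

theorem isBigO_sqrt_smul_integral_exp_neg_mul_sq_smul_sub_sum {h : ℝ → E} {s₀ : ℝ}
    (hh : AnalyticAt ℝ h 0) (hint : Integrable fun u => exp (-s₀ * u ^ 2) • h u) (N : ℕ) :
    (fun s : ℝ => √s • (∫ u, exp (-s * u ^ 2) • h u) - ∑ k ∈ range N,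
        (Real.Gamma (k + 1 / 2) / s ^ k) • ((2 * k).factorial : ℝ)⁻¹ • iteratedDeriv (2 * k) h 0)
      =O[atTop] fun s => (s ^ N)⁻¹ := by
  set c : ℕ → E := fun k => (k.factorial : ℝ)⁻¹ • iteratedDeriv k h 0
  set P : ℝ → E := fun u => ∑ k ∈ range (2 * N), u ^ k • c k
  have hP : ∀ s : ℝ, 0 < s → Integrable fun u => exp (-s * u ^ 2) • P u := fun s hs =>
    integrable_exp_neg_mul_sq_smul_sum hs c (2 * N)
  have hh_int : ∀ s, s₀ ≤ s → Integrable fun u => exp (-s * u ^ 2) • h u := fun s hs =>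
    integrable_exp_neg_mul_sq_smul_of_le hs hint
  have hR_int : Integrable fun u => exp (-(max s₀ 1) * u ^ 2) • (h u - P u) := by
    simp only [smul_sub]
    exact (hh_int _ (le_max_left s₀ 1)).sub (hP _ (one_pos.trans_le (le_max_right s₀ 1)))
  have hR := isBigO_integral_exp_neg_mul_sq_smul
    (neg_one_lt_zero.trans_le (2 * N).cast_nonneg) hR_int (isBigO_sub_maclaurin hh (2 * N))
  refine ((isBigO_refl (fun s : ℝ => √s) atTop).smul hR).congr' ?_ ?_
  · filter_upwards [eventually_gt_atTop 0, eventually_ge_atTop s₀] with s hs hs₀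
    simp only [smul_sub]
    rw [integral_sub (hh_int s hs₀) (hP s hs), smul_sub,
      sqrt_smul_integral_exp_neg_mul_sq_smul_sum hs]
  · filter_upwards [eventually_gt_atTop 0] with s hs
    rw [smul_eq_mul, Real.sqrt_eq_rpow, ← Real.rpow_add hs, ← Real.rpow_natCast,
      ← Real.rpow_neg hs.le]
    push_cast
    ring_nf

end WatsonLemma

section LaplacePhase

open Topology

/-- The square root of `φ x` carrying the sign of `x`. When `φ` has a zero minimum at `0`, this is
the coordinate in which `φ` becomes the square function. -/
noncomputable def signedSqrt (φ : ℝ → ℝ) (x : ℝ) : ℝ := Real.sign x * √(φ x)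

/-- A phase function for Laplace's method on the open interval `s`: analytic, decreasing up to its
only critical point, the nondegenerate minimum `φ 0 = 0`, and increasing beyond it. -/
structure IsLaplacePhase (φ : ℝ → ℝ) (s : Set ℝ) : Prop where
  isOpen : IsOpen s
  ordConnected : s.OrdConnected
  zero_mem : 0 ∈ s
  analyticOnNhd : AnalyticOnNhd ℝ φ s
  map_zero : φ 0 = 0
  mul_deriv_pos : ∀ x ∈ s, x ≠ 0 → 0 < x * deriv φ x
  iteratedDeriv_two_pos : 0 < iteratedDeriv 2 φ 0

namespace IsLaplacePhase

variable {φ : ℝ → ℝ} {s : Set ℝ} {x : ℝ}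

lemma pos (hφ : IsLaplacePhase φ s) (hx : x ∈ s) (h0 : x ≠ 0) : 0 < φ x := by
  have hcont := hφ.analyticOnNhd.continuousOn
  rcases h0.lt_or_gt with hneg | hpos
  · have hsub : Icc x 0 ⊆ s := hφ.ordConnected.out hx hφ.zero_mem
    rw [← hφ.map_zero]
    refine strictAntiOn_of_deriv_neg (convex_Icc x 0) (hcont.mono hsub) (fun z hz => ?_)
      (left_mem_Icc.2 hneg.le) (right_mem_Icc.2 hneg.le) hneg
    rw [interior_Icc] at hz
    exact neg_of_mul_pos_right (hφ.mul_deriv_pos z (hsub (Ioo_subset_Icc_self hz)) hz.2.ne) hz.2.le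
  · have hsub : Icc 0 x ⊆ s := hφ.ordConnected.out hφ.zero_mem hx
    rw [← hφ.map_zero]
    refine strictMonoOn_of_deriv_pos (convex_Icc 0 x) (hcont.mono hsub) (fun z hz => ?_)
      (left_mem_Icc.2 hpos.le) (right_mem_Icc.2 hpos.le) hpos
    rw [interior_Icc] at hz
    exact pos_of_mul_pos_right (hφ.mul_deriv_pos z (hsub (Ioo_subset_Icc_self hz)) hz.1.ne') hz.1.le

lemma deriv_zero (hφ : IsLaplacePhase φ s) : deriv φ 0 = 0 := by
  refine IsLocalMin.deriv_eq_zero ?_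
  filter_upwards [hφ.isOpen.mem_nhds hφ.zero_mem] with x hx
  rcases eq_or_ne x 0 with rfl | h0
  · exact le_rfl
  · exact hφ.map_zero.trans_le (hφ.pos hx h0).le

lemma signedSqrt_sq (hφ : IsLaplacePhase φ s) (hx : x ∈ s) : signedSqrt φ x ^ 2 = φ x := by
  rcases eq_or_ne x 0 with rfl | h0
  · simp [signedSqrt, hφ.map_zero]
  · rw [signedSqrt, mul_pow, Real.sq_sqrt (hφ.pos hx h0).le]
    rcases Real.sign_apply_eq_of_ne_zero x h0 with h | h <;> simp [h]

lemma mul_signedSqrt_pos (hφ : IsLaplacePhase φ s) (hx : x ∈ s) (h0 : x ≠ 0) :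
    0 < x * signedSqrt φ x := by
  rw [signedSqrt, ← mul_assoc, mul_comm x]
  exact mul_pos (Real.sign_mul_pos_of_ne_zero x h0) (Real.sqrt_pos.2 (hφ.pos hx h0))

lemma exists_analyticAt_signedSqrt_eq_mul (hφ : IsLaplacePhase φ s) :
    ∃ k : ℝ → ℝ, AnalyticAt ℝ k 0 ∧ k 0 = √(iteratedDeriv 2 φ 0 / 2) ∧
      signedSqrt φ =ᶠ[𝓝 0] fun x => x * k x := by
  obtain ⟨F, hF, hφF⟩ := (hφ.analyticOnNhd 0 hφ.zero_mem).exists_eq_sum_add_pow_mul 3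
  set q : ℝ → ℝ := fun x => iteratedDeriv 2 φ 0 / 2 + x * F x
  have hq : AnalyticAt ℝ q 0 := analyticAt_const.add (analyticAt_id.mul hF)
  have hq0 : q 0 = iteratedDeriv 2 φ 0 / 2 := by simp [q]
  have hφq : ∀ x, φ x = x ^ 2 * q x := fun x => by
    simp only [hφF x, Finset.sum_range_succ, Finset.range_zero, Finset.sum_empty,
      iteratedDeriv_zero, hφ.map_zero, iteratedDeriv_one, hφ.deriv_zero, smul_eq_mul, q]
    norm_num
    ring
  have hq_ne : q 0 ≠ 0 := by rw [hq0]; exact (half_pos hφ.iteratedDeriv_two_pos).ne'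
  refine ⟨fun x => √(q x), (hq.contDiffAt.sqrt hq_ne).analyticAt, congrArg _ hq0, .of_forall ?_⟩
  intro x
  rw [signedSqrt, hφq, Real.sqrt_mul (sq_nonneg x), Real.sqrt_sq_eq_abs, ← mul_assoc]
  rcases lt_trichotomy x 0 with h | h | h
  · simp [Real.sign_of_neg h, abs_of_neg h]
  · simp [h]
  · simp [Real.sign_of_pos h, abs_of_pos h]

lemma hasDerivAt_signedSqrt_zero (hφ : IsLaplacePhase φ s) :
    HasDerivAt (signedSqrt φ) (√(iteratedDeriv 2 φ 0 / 2)) 0 := by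
  obtain ⟨k, hk, hk0, heq⟩ := hφ.exists_analyticAt_signedSqrt_eq_mul
  have hmul := (hasDerivAt_id' (0 : ℝ)).fun_mul hk.differentiableAt.hasDerivAt
  rw [zero_mul, add_zero, one_mul, hk0] at hmul
  exact hmul.congr_of_eventuallyEq heq

lemma analyticAt_signedSqrt (hφ : IsLaplacePhase φ s) (hx : x ∈ s) :
    AnalyticAt ℝ (signedSqrt φ) x := by
  rcases eq_or_ne x 0 with rfl | h0
  · obtain ⟨k, hk, -, heq⟩ := hφ.exists_analyticAt_signedSqrt_eq_mul
    exact (analyticAt_id.mul hk).congr heq.symm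
  · have hsqrt : AnalyticAt ℝ (fun z => √(φ z)) x :=
      ((hφ.analyticOnNhd x hx).contDiffAt.sqrt (hφ.pos hx h0).ne').analyticAt
    refine (analyticAt_const (v := Real.sign x).fun_mul hsqrt).congr ?_
    rcases h0.lt_or_gt with h | h
    · filter_upwards [Iio_mem_nhds h] with z hz
      rw [signedSqrt, Real.sign_of_neg h, Real.sign_of_neg hz]
    · filter_upwards [Ioi_mem_nhds h] with z hz
      rw [signedSqrt, Real.sign_of_pos h, Real.sign_of_pos hz]

lemma two_mul_signedSqrt_mul_deriv (hφ : IsLaplacePhase φ s) (hx : x ∈ s) :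
    2 * signedSqrt φ x * deriv (signedSqrt φ) x = deriv φ x := by
  have hsq : (fun z => signedSqrt φ z ^ 2) =ᶠ[𝓝 x] φ := by
    filter_upwards [hφ.isOpen.mem_nhds hx] with z hz using hφ.signedSqrt_sq hz
  simpa using ((hφ.analyticAt_signedSqrt hx).differentiableAt.hasDerivAt.pow 2).unique
    (((hφ.analyticOnNhd x hx).differentiableAt.hasDerivAt).congr_of_eventuallyEq hsq)

lemma deriv_signedSqrt_pos (hφ : IsLaplacePhase φ s) (hx : x ∈ s) :
    0 < deriv (signedSqrt φ) x := by
  rcases eq_or_ne x 0 with rfl | h0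
  · rw [hφ.hasDerivAt_signedSqrt_zero.deriv]
    exact Real.sqrt_pos.2 (half_pos hφ.iteratedDeriv_two_pos)
  · have hderiv := hφ.mul_deriv_pos x hx h0
    rw [← hφ.two_mul_signedSqrt_mul_deriv hx] at hderiv
    have hx_root := hφ.mul_signedSqrt_pos hx h0
    refine pos_of_mul_pos_right (a := 2 * (x * signedSqrt φ x)) ?_ (by positivity)
    linarith

lemma strictMonoOn_signedSqrt (hφ : IsLaplacePhase φ s) : StrictMonoOn (signedSqrt φ) s :=
  strictMonoOn_of_deriv_pos hφ.ordConnected.convex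
    (fun _ hx => (hφ.analyticAt_signedSqrt hx).continuousAt.continuousWithinAt)
    fun _ hx => hφ.deriv_signedSqrt_pos (interior_subset hx)

section RightInverse

variable {f : ℝ → ℝ} (hmem : ∀ u, f u ∈ s) (hf : Function.RightInverse f (signedSqrt φ))

include hmem hf

lemma rightInverse_signedSqrt_apply (hφ : IsLaplacePhase φ s) (hx : x ∈ s) :
    f (signedSqrt φ x) = x :=
  hφ.strictMonoOn_signedSqrt.injOn (hmem _) hx (hf _)

lemma rightInverse_zero (hφ : IsLaplacePhase φ s) : f 0 = 0 := by
  simpa [signedSqrt] using hφ.rightInverse_signedSqrt_apply hmem hf hφ.zero_mem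

lemma range_rightInverse (hφ : IsLaplacePhase φ s) : range f = s :=
  (range_subset_iff.2 hmem).antisymm fun _ hx =>
    ⟨_, hφ.rightInverse_signedSqrt_apply hmem hf hx⟩

lemma strictMono_rightInverse (hφ : IsLaplacePhase φ s) : StrictMono f := fun u v huv => by
  rwa [← hφ.strictMonoOn_signedSqrt.lt_iff_lt (hmem u) (hmem v), hf, hf]

lemma apply_rightInverse (hφ : IsLaplacePhase φ s) (u : ℝ) : φ (f u) = u ^ 2 := by
  rw [← hφ.signedSqrt_sq (hmem u), hf]

lemma analyticAt_rightInverse (hφ : IsLaplacePhase φ s) (u : ℝ) : AnalyticAt ℝ f u := by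
  have hcomp : f ∘ signedSqrt φ =ᶠ[𝓝 (f u)] id := by
    filter_upwards [hφ.isOpen.mem_nhds (hmem u)] with x hx
    exact hφ.rightInverse_signedSqrt_apply hmem hf hx
  rw [← hf u, ← analyticAt_comp_iff_of_deriv_ne_zero (hφ.analyticAt_signedSqrt (hmem u))
    (hφ.deriv_signedSqrt_pos (hmem u)).ne']
  exact analyticAt_id.congr hcomp.symm

lemma deriv_rightInverse_zero (hφ : IsLaplacePhase φ s) :
    deriv f 0 = (√(iteratedDeriv 2 φ 0 / 2))⁻¹ := by
  refine (HasDerivAt.of_local_left_inverse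
    (hφ.analyticAt_rightInverse hmem hf 0).continuousAt ?_ ?_ (.of_forall hf)).deriv
  · rw [hφ.rightInverse_zero hmem hf]
    exact hφ.hasDerivAt_signedSqrt_zero
  · exact (Real.sqrt_pos.2 (half_pos hφ.iteratedDeriv_two_pos)).ne'

lemma deriv_apply_rightInverse_mul_deriv (hφ : IsLaplacePhase φ s) (u : ℝ) :
    deriv φ (f u) * deriv f u = 2 * u := by
  have hchain := ((hφ.analyticOnNhd _ (hmem u)).differentiableAt.hasDerivAt).comp u
    (hφ.analyticAt_rightInverse hmem hf u).differentiableAt.hasDerivAt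
  simpa using hchain.unique
    ((hasDerivAt_pow 2 u).congr_of_eventuallyEq
      (.of_forall fun v => hφ.apply_rightInverse hmem hf v))

end RightInverse

end IsLaplacePhase

end LaplacePhase

section LaplaceMethod

open MeasureTheory

namespace IsLaplacePhase

variable {φ f : ℝ → ℝ} {s : Set ℝ} (hmem : ∀ u, f u ∈ s)
  (hf : Function.RightInverse f (signedSqrt φ))

include hmem hf

lemma integrableOn_exp_neg_mul_iff (hφ : IsLaplacePhase φ s) (t : ℝ) :
    IntegrableOn (fun x => exp (-t * φ x)) s ↔
      Integrable fun u => exp (-t * u ^ 2) • deriv f u := by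
  have hderiv : ∀ u ∈ univ, HasDerivWithinAt f (deriv f u) univ u := fun u _ =>
    (hφ.analyticAt_rightInverse hmem hf u).differentiableAt.hasDerivAt.hasDerivWithinAt
  have hcov := integrableOn_image_iff_integrableOn_deriv_smul_of_monotoneOn .univ hderiv
    ((hφ.strictMono_rightInverse hmem hf).monotone.monotoneOn univ) fun x => exp (-t * φ x)
  simpa only [image_univ, hφ.range_rightInverse hmem hf, hφ.apply_rightInverse hmem hf,
    smul_eq_mul, mul_comm, integrableOn_univ] using hcov

lemma setIntegral_exp_neg_mul (hφ : IsLaplacePhase φ s) (t : ℝ) :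
    ∫ x in s, exp (-t * φ x) = ∫ u, exp (-t * u ^ 2) • deriv f u := by
  have hderiv : ∀ u ∈ univ, HasDerivWithinAt f (deriv f u) univ u := fun u _ =>
    (hφ.analyticAt_rightInverse hmem hf u).differentiableAt.hasDerivAt.hasDerivWithinAt
  have hcov := integral_image_eq_integral_deriv_smul_of_monotoneOn .univ hderiv
    ((hφ.strictMono_rightInverse hmem hf).monotone.monotoneOn univ) fun x => exp (-t * φ x)
  simpa only [image_univ, hφ.range_rightInverse hmem hf, hφ.apply_rightInverse hmem hf,
    smul_eq_mul, mul_comm, setIntegral_univ] using hcov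

theorem isBigO_sqrt_mul_setIntegral_sub_sum (hφ : IsLaplacePhase φ s) {t₀ : ℝ}
    (hint : IntegrableOn (fun x => exp (-t₀ * φ x)) s) (N : ℕ) :
    (fun t => √t * (∫ x in s, exp (-t * φ x)) - ∑ k ∈ range N, Real.Gamma (k + 1 / 2) / t ^ k *
        (((2 * k).factorial : ℝ)⁻¹ * iteratedDeriv (2 * k) (deriv f) 0))
      =O[atTop] fun t => (t ^ N)⁻¹ := by
  simpa only [hφ.setIntegral_exp_neg_mul hmem hf, smul_eq_mul] using
    isBigO_sqrt_smul_integral_exp_neg_mul_sq_smul_sub_sum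
      (hφ.analyticAt_rightInverse hmem hf 0).deriv
      ((hφ.integrableOn_exp_neg_mul_iff hmem hf t₀).1 hint) N

end IsLaplacePhase

end LaplaceMethod

section Stirling

open MeasureTheory Topology

/-- The phase of Stirling's formula: `t ^ s * exp (-t)` at `t = s * (1 + x)` is
`(s / e) ^ s * exp (-s * stirlingPhase x)`. -/
noncomputable def stirlingPhase (x : ℝ) : ℝ := x - Real.log (1 + x)

lemma hasDerivAt_stirlingPhase {x : ℝ} (hx : -1 < x) :
    HasDerivAt stirlingPhase (x / (1 + x)) x := by
  have hx' : 1 + x ≠ 0 := by linarith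
  have hd := (hasDerivAt_id' x).fun_sub (((hasDerivAt_id' x).const_add 1).log hx')
  convert! hd using 1
  field_simp
  ring

lemma iteratedDeriv_two_stirlingPhase_zero : iteratedDeriv 2 stirlingPhase 0 = 1 := by
  have hderiv : deriv stirlingPhase =ᶠ[𝓝 0] fun x => x / (1 + x) := by
    filter_upwards [Ioi_mem_nhds neg_one_lt_zero] with x hx
    exact (hasDerivAt_stirlingPhase hx).deriv
  rw [iteratedDeriv_succ, iteratedDeriv_one, hderiv.deriv_eq]
  simpa using ((hasDerivAt_id' (0 : ℝ)).fun_div ((hasDerivAt_id' (0 : ℝ)).const_add 1)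
    (by simp)).deriv

lemma isLaplacePhase_stirlingPhase : IsLaplacePhase stirlingPhase (Ioi (-1)) where
  isOpen := isOpen_Ioi
  ordConnected := ordConnected_Ioi
  zero_mem := mem_Ioi.2 neg_one_lt_zero
  analyticOnNhd x hx :=
    analyticAt_id.sub ((analyticAt_const.add analyticAt_id).log (by simp; linarith [mem_Ioi.1 hx]))
  map_zero := by simp [stirlingPhase]
  mul_deriv_pos x hx h0 := by
    have hx' : 0 < 1 + x := by linarith [mem_Ioi.1 hx]
    rw [(hasDerivAt_stirlingPhase hx).deriv, ← mul_div_assoc]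
    exact div_pos (mul_self_pos.2 h0) hx'
  iteratedDeriv_two_pos := by simp [iteratedDeriv_two_stirlingPhase_zero]

lemma setIntegral_exp_neg_mul_stirlingPhase {s : ℝ} (hs : 0 < s) :
    ∫ x in Ioi (-1), exp (-s * stirlingPhase x) =
      exp s * ((1 / s) ^ (s + 1) * Real.Gamma (s + 1)) := by
  have hpoint : ∀ x ∈ Ioi (-1 : ℝ), exp (-s * stirlingPhase x) =
      exp s * ((1 + x) ^ (s + 1 - 1) * exp (-(s * (1 + x)))) := by
    intro x hx
    have hx' : 0 < 1 + x := by linarith [mem_Ioi.1 hx]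
    rw [Real.rpow_def_of_pos hx', ← Real.exp_add, ← Real.exp_add, stirlingPhase]
    ring_nf
  have htranslate := (measurePreserving_add_left volume (1 : ℝ)).setIntegral_preimage_emb
    (measurableEmbedding_addLeft 1) (fun t => t ^ (s + 1 - 1) * exp (-(s * t))) (Ioi 0)
  simp only [preimage_const_add_Ioi, zero_sub] at htranslate
  rw [setIntegral_congr_fun measurableSet_Ioi hpoint, integral_const_mul, htranslate,
    Real.integral_rpow_mul_exp_neg_mul_Ioi (by positivity) hs]

lemma integrableOn_exp_neg_mul_stirlingPhase {s : ℝ} (hs : 0 < s) :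
    IntegrableOn (fun x => exp (-s * stirlingPhase x)) (Ioi (-1)) := by
  refine .of_integral_ne_zero ?_
  rw [setIntegral_exp_neg_mul_stirlingPhase hs]
  have : 0 < Real.Gamma (s + 1) := Real.Gamma_pos_of_pos (by positivity)
  positivity

lemma Gamma_add_one_div_eq_sqrt_mul_setIntegral {s : ℝ} (hs : 0 < s) :
    Real.Gamma (s + 1) / ((s / exp 1) ^ s * √s) =
      √s * ∫ x in Ioi (-1), exp (-s * stirlingPhase x) := by
  rw [setIntegral_exp_neg_mul_stirlingPhase hs, Real.div_rpow hs.le (exp_pos 1).le,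
    Real.exp_one_rpow, one_div, Real.inv_rpow hs.le, Real.rpow_add_one hs.ne']
  have : √s ≠ 0 := (Real.sqrt_pos.2 hs).ne'
  field_simp
  rw [Real.sq_sqrt hs.le]

variable {f y : ℝ → ℝ}

lemma deriv_rightInverse_signedSqrt_stirlingPhase (hmem : ∀ u, f u ∈ Set.Ioi (-1))
    (hf : Function.RightInverse f (signedSqrt stirlingPhase))
    (hy : ∀ v, y v = if v = 0 then √2 / 2 else v / f v) (u : ℝ) :
    deriv f u = 2 * y u + 2 * u := by
  have hφ := isLaplacePhase_stirlingPhase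
  rcases eq_or_ne u 0 with rfl | h0
  · rw [hφ.deriv_rightInverse_zero hmem hf, iteratedDeriv_two_stirlingPhase_zero, hy, if_pos rfl,
      one_div, Real.sqrt_inv, inv_inv]
    ring
  · have hfu : f u ≠ 0 := fun h => h0 ((hφ.strictMono_rightInverse hmem hf).injective
      (h.trans (hφ.rightInverse_zero hmem hf).symm))
    have hadd : 1 + f u ≠ 0 := by linarith [mem_Ioi.1 (hmem u)]
    have hchain := hφ.deriv_apply_rightInverse_mul_deriv hmem hf u
    rw [(hasDerivAt_stirlingPhase (hmem u)).deriv] at hchain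
    rw [hy, if_neg h0]
    field_simp at hchain ⊢
    linarith

lemma iteratedDeriv_two_mul_deriv_rightInverse (hmem : ∀ u, f u ∈ Set.Ioi (-1))
    (hf : Function.RightInverse f (signedSqrt stirlingPhase))
    (hy : ∀ v, y v = if v = 0 then √2 / 2 else v / f v) (k : ℕ) :
    iteratedDeriv (2 * k) (deriv f) 0 = 2 * iteratedDeriv (2 * k) y 0 := by
  have hy_eq : y = fun u => 2⁻¹ * deriv f u - u := funext fun u => by
    rw [deriv_rightInverse_signedSqrt_stirlingPhase hmem hf hy]
    ring
  have hf' : ContDiffAt ℝ (2 * k : ℕ) (deriv f) 0 :=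
    (isLaplacePhase_stirlingPhase.analyticAt_rightInverse hmem hf 0).deriv.contDiffAt
  have hid : iteratedDeriv (2 * k) (fun u : ℝ => u) 0 = 0 := by
    rw [iteratedDeriv_fun_id_zero, if_neg (by omega)]
  rw [hy_eq, iteratedDeriv_fun_sub (contDiffAt_const.mul hf') contDiffAt_fun_id, hid,
    iteratedDeriv_const_mul_field]
  ring

end Stirling

theorem stmt_17 (f : ℝ → ℝ)
    (hf : ∀ u : ℝ, f u ∈ Set.Ioi (-1 : ℝ) ∧
      Real.sign (f u) * Real.sqrt (f u - Real.log (1 + f u)) = u)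
    (y : ℝ → ℝ)
    (hy : ∀ v : ℝ, y v = if v = 0 then Real.sqrt 2 / 2 else v / f v)
    (a : ℕ → ℝ)
    (ha : ∀ k : ℕ, a k = iteratedDeriv k y 0 / (Nat.factorial k))
    (n : ℕ) :
    (fun s : ℝ =>
        Real.Gamma (s + 1) / ((s / Real.exp 1) ^ s * Real.sqrt s) -
          ∑ k ∈ Finset.range (n + 1),
            2 * a (2 * k) * Real.Gamma ((k : ℝ) + 1/2) / s ^ k)
      =o[Filter.atTop] fun s : ℝ => 1 / s ^ n := by
  have hmem : ∀ u, f u ∈ Set.Ioi (-1) := fun u => (hf u).1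
  have hinv : Function.RightInverse f (signedSqrt stirlingPhase) := fun u => (hf u).2
  have hlaplace := isLaplacePhase_stirlingPhase.isBigO_sqrt_mul_setIntegral_sub_sum hmem hinv
    (integrableOn_exp_neg_mul_stirlingPhase one_pos) (n + 1)
  have hpow : (fun s : ℝ => (s ^ (n + 1))⁻¹) =o[atTop] fun s => 1 / s ^ n := by
    simpa only [one_div] using (isLittleO_pow_pow_atTop_of_lt n.lt_succ_self).inv_rev
      ((eventually_gt_atTop 0).mono fun s hs h => absurd h (pow_pos hs n).ne')
  refine (hlaplace.congr' ?_ .rfl).trans_isLittleO hpow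
  filter_upwards [eventually_gt_atTop 0] with s hs
  rw [Gamma_add_one_div_eq_sqrt_mul_setIntegral hs]
  congr 1
  refine Finset.sum_congr rfl fun k _ => ?_
  rw [iteratedDeriv_two_mul_deriv_rightInverse hmem hinv hy, ha]
  ring
end
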